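/- Let U ⊆ ℝ⁴ be open and D : U → ℝ smooth and nowhere vanishing. The Ricci tensor of the reduced Lychagin–Rubtsov metric G_D (computed from the coordinate Christoffel symbols and curvature tensor) vanishes identically on U if and only if D satisfies on U the system: 3 D_i² − 2 D D_{ii} = 0 for each i ∈ {x, y, p, q}; 3 D_x D_y − 2 D D_{xy} = 0, 3 D_x D_q − 2 D D_{xq} = 0, 3 D_p D_y − 2 D D_{py} = 0, 3 D_p D_q − 2 D D_{pq} = 0; and −2 D D_{yq} + 3 D_x D_p − 4 D D_{xp} = 0, −2 D D_{xp} + 3 D_y D_q − 4 D D_{yq} = 0, where subscripts denote partial derivatives in the coordinates (x, y, p, q). -/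

import Mathlib

/-- Partial derivative of `f : ℝ⁴ → ℝ` in the `i`-th coordinate direction. -/
noncomputable def pd (i : Fin 4) (f : (Fin 4 → ℝ) → ℝ) (u : Fin 4 → ℝ) : ℝ :=
  fderiv ℝ f u (Pi.single i 1)

/-- Christoffel symbols `Γᵏᵢⱼ` of a matrix-valued metric `g` in coordinates. -/
noncomputable def christoffel (g : (Fin 4 → ℝ) → Matrix (Fin 4) (Fin 4) ℝ)
    (k i j : Fin 4) (u : Fin 4 → ℝ) : ℝ :=
  (1 / 2) * ∑ l, (g u)⁻¹ k l *
    (pd i (fun v => g v j l) u + pd j (fun v => g v i l) u - pd l (fun v => g v i j) u)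

/-- Curvature tensor `Rˡᵢⱼₖ` of a matrix-valued metric `g` in coordinates. -/
noncomputable def riemann (g : (Fin 4 → ℝ) → Matrix (Fin 4) (Fin 4) ℝ)
    (l i j k : Fin 4) (u : Fin 4 → ℝ) : ℝ :=
  pd j (christoffel g l i k) u - pd k (christoffel g l i j) u +
    ∑ m, (christoffel g l j m u * christoffel g m i k u -
          christoffel g l k m u * christoffel g m i j u)

/-- Ricci tensor `Ricᵢₖ = Σₗ Rˡᵢₗₖ`. -/
noncomputable def ricci (g : (Fin 4 → ℝ) → Matrix (Fin 4) (Fin 4) ℝ)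
    (i k : Fin 4) (u : Fin 4 → ℝ) : ℝ :=
  ∑ l, riemann g l i l k u

/-- Scalar curvature `R = Σᵢₖ (g⁻¹)ⁱᵏ Ricᵢₖ`. -/
noncomputable def scalarCurv (g : (Fin 4 → ℝ) → Matrix (Fin 4) (Fin 4) ℝ)
    (u : Fin 4 → ℝ) : ℝ :=
  ∑ i, ∑ k, (g u)⁻¹ i k * ricci g i k u

/-- The reduced Lychagin–Rubtsov metric associated with `D : ℝ⁴ → ℝ`. -/
noncomputable def GD (D : (Fin 4 → ℝ) → ℝ) (u : Fin 4 → ℝ) :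
    Matrix (Fin 4) (Fin 4) ℝ :=
  !![0, 0, D u, 0;
     0, 0, 0, D u;
     D u, 0, 0, 0;
     0, D u, 0, 0]


lemma two_le_inf : (2 : WithTop ℕ∞) ≤ ((⊤ : ℕ∞) : WithTop ℕ∞) :=
  WithTop.coe_le_coe.2 (le_top : (2 : ℕ∞) ≤ ⊤)

def fl (k : Fin 4) : Fin 4 := ![2, 3, 0, 1] k
def kd (i j : Fin 4) : ℝ := if i = j then 1 else 0

lemma pd_congr {f g : (Fin 4 → ℝ) → ℝ} {u : Fin 4 → ℝ} (h : f =ᶠ[nhds u] g) (i : Fin 4) :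
    pd i f u = pd i g u := by
  unfold pd; rw [h.fderiv_eq]

lemma GD_apply (D : (Fin 4 → ℝ) → ℝ) (u : Fin 4 → ℝ) (i j : Fin 4) :
    GD D u i j = kd (fl i) j * D u := by
  fin_cases i <;> fin_cases j <;> simp [GD, kd, fl]

lemma GD_inv (D : (Fin 4 → ℝ) → ℝ) (u : Fin 4 → ℝ) (h : D u ≠ 0) (i j : Fin 4) :
    (GD D u)⁻¹ i j = kd (fl i) j * (D u)⁻¹ := by
  have : (GD D u)⁻¹ = GD (fun v => (D v)⁻¹) u := by
    apply Matrix.inv_eq_right_inv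
    ext i j
    fin_cases i <;> fin_cases j <;> simp [GD, Matrix.mul_apply, Fin.sum_univ_four, h]
  rw [this, GD_apply]

lemma pd_const_mul (D : (Fin 4 → ℝ) → ℝ) (u : Fin 4 → ℝ) (h : DifferentiableAt ℝ D u)
    (i : Fin 4) (c : ℝ) : pd i (fun v => c * D v) u = c * pd i D u := by
  unfold pd; rw [fderiv_const_mul h]; rfl

lemma christoffel_GD (D : (Fin 4 → ℝ) → ℝ) (u : Fin 4 → ℝ) (h : DifferentiableAt ℝ D u)
    (h0 : D u ≠ 0) (k i j : Fin 4) :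
    christoffel (GD D) k i j u = (D u)⁻¹ * (1 / 2 * (kd k j * pd i D u + kd k i * pd j D u
      - kd (fl i) j * pd (fl k) D u)) := by
  unfold christoffel
  simp only [GD_apply, GD_inv D u h0, pd_const_mul D u h]
  fin_cases k <;> fin_cases i <;> fin_cases j <;> simp [Fin.sum_univ_four, kd, fl] <;> ring

lemma pd_formula (D a b c : (Fin 4 → ℝ) → ℝ) (u : Fin 4 → ℝ) (h : DifferentiableAt ℝ D u)
    (h0 : D u ≠ 0) (ha : DifferentiableAt ℝ a u) (hb : DifferentiableAt ℝ b u)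
    (hc : DifferentiableAt ℝ c u) (x y z : ℝ) (m : Fin 4) :
    pd m (fun v => (D v)⁻¹ * (1 / 2 * (x * a v + y * b v - z * c v))) u =
      (D u)⁻¹ * (1 / 2 * (x * pd m a u + y * pd m b u - z * pd m c u))
      - (D u)⁻¹ ^ 2 * pd m D u * (1 / 2 * (x * a u + y * b u - z * c u)) := by
  unfold pd
  have H := ((hasDerivAt_inv h0).comp_hasFDerivAt u h.hasFDerivAt).mul
    ((((ha.hasFDerivAt.const_mul x).add (hb.hasFDerivAt.const_mul y)).sub
      (hc.hasFDerivAt.const_mul z)).const_mul (1 / 2))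
  have H2 := H.fderiv
  have e : ((Inv.inv ∘ D) * fun v => 1 / 2 * (((fun v => x * a v) + (fun v => y * b v))
      - (fun v => z * c v)) v) =
     (fun v => (D v)⁻¹ * (1 / 2 * (x * a v + y * b v - z * c v))) := by
    ext v; simp
  change fderiv ℝ (fun v => (D v)⁻¹ * (1 / 2 * (x * a v + y * b v - z * c v))) u = _ at H2
  rw [H2]
  simp
  ring

lemma pd_symm (U : Set (Fin 4 → ℝ)) (hU : IsOpen U)
    (D : (Fin 4 → ℝ) → ℝ) (hD : ContDiffOn ℝ (⊤ : ℕ∞) D U)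
    (u : Fin 4 → ℝ) (hu : u ∈ U) (m n : Fin 4) : pd m (pd n D) u = pd n (pd m D) u := by
  have hc : ∀ v ∈ U, ContDiffAt ℝ (⊤ : ℕ∞) D v := fun v hv => hD.contDiffAt (hU.mem_nhds hv)
  have hd : ∀ v ∈ U, DifferentiableAt ℝ D v := fun v hv => (hc v hv).differentiableAt (by simp)
  have hfd : DifferentiableAt ℝ (fderiv ℝ D) u :=
    ((hc u hu).fderiv_right (m := 1) (by rw [one_add_one_eq_two]; exact two_le_inf)).differentiableAt (by simp)
  have hpd : ∀ m, DifferentiableAt ℝ (pd m D) u := fun m =>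
    hfd.clm_apply (differentiableAt_const _)
  have hpp : ∀ m n, pd m (pd n D) u = fderiv ℝ (fderiv ℝ D) u (Pi.single m 1) (Pi.single n 1) := by
    intro m n
    change fderiv ℝ (fun v => fderiv ℝ D v (Pi.single n 1)) u _ = _
    rw [fderiv_clm_apply hfd (differentiableAt_const _)]
    simp
  have hsymm : ∀ m n, pd m (pd n D) u = pd n (pd m D) u := by
    intro m n
    rw [hpp, hpp]
    exact ((hc u hu).isSymmSndFDerivAt (by simpa using two_le_inf)).eq _ _
  exact hsymm m n

set_option maxHeartbeats 4000000 in
lemma ricci_GD (U : Set (Fin 4 → ℝ)) (hU : IsOpen U)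
    (D : (Fin 4 → ℝ) → ℝ) (hD : ContDiffOn ℝ (⊤ : ℕ∞) D U)
    (hD0 : ∀ u ∈ U, D u ≠ 0) (u : Fin 4 → ℝ) (hu : u ∈ U) (i k : Fin 4) :
    2 * (D u) ^ 2 * ricci (GD D) i k u = 3 * pd i D u * pd k D u - 2 * D u * pd i (pd k D) u
      - kd (fl i) k * (2 * D u * (pd 0 (pd 2 D) u + pd 1 (pd 3 D) u)) := by
  have hc : ∀ v ∈ U, ContDiffAt ℝ (⊤ : ℕ∞) D v := fun v hv => hD.contDiffAt (hU.mem_nhds hv)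
  have hd : ∀ v ∈ U, DifferentiableAt ℝ D v := fun v hv => (hc v hv).differentiableAt (by simp)
  have hfd : DifferentiableAt ℝ (fderiv ℝ D) u :=
    ((hc u hu).fderiv_right (m := 1) (by rw [one_add_one_eq_two]; exact two_le_inf)).differentiableAt (by simp)
  have hpd : ∀ m, DifferentiableAt ℝ (pd m D) u := fun m =>
    hfd.clm_apply (differentiableAt_const _)
  have hsymm := pd_symm U hU D hD u hu
  have hG : ∀ m l i j, pd m (christoffel (GD D) l i j) u = 
      (D u)⁻¹ * (1 / 2 * (kd l j * pd m (pd i D) u + kd l i * pd m (pd j D) u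
        - kd (fl i) j * pd m (pd (fl l) D) u))
      - (D u)⁻¹ ^ 2 * pd m D u * (1 / 2 * (kd l j * pd i D u + kd l i * pd j D u
        - kd (fl i) j * pd (fl l) D u)) := by
    intro m l i j
    rw [← pd_formula D _ _ _ u (hd u hu) (hD0 u hu) (hpd _) (hpd _) (hpd _)]
    apply pd_congr
    filter_upwards [hU.mem_nhds hu] with v hv
    exact christoffel_GD D v (hd v hv) (hD0 v hv) l i j
  have h0 := hD0 u hu
  unfold ricci riemann
  simp only [hG, christoffel_GD D u (hd u hu) h0]
  have s10 := hsymm 1 0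
  have s20 := hsymm 2 0
  have s30 := hsymm 3 0
  have s21 := hsymm 2 1
  have s31 := hsymm 3 1
  have s32 := hsymm 3 2
  clear hG hsymm
  fin_cases i <;> fin_cases k <;> simp [Fin.sum_univ_four, kd, fl, s10, s20, s30, s21, s31, s32] <;>
    field_simp <;> ring

/-- For `D` smooth and nowhere vanishing on an open set `U ⊆ ℝ⁴`, the Ricci tensor of
the reduced Lychagin–Rubtsov metric `G_D` vanishes identically on `U` if and only if
`D` satisfies the stated system of second-order PDEs on `U`.
Coordinates: `x = 0`, `y = 1`, `p = 2`, `q = 3`. -/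
theorem ricci_flat_iff_PDE_system (U : Set (Fin 4 → ℝ)) (hU : IsOpen U)
    (D : (Fin 4 → ℝ) → ℝ) (hD : ContDiffOn ℝ (⊤ : ℕ∞) D U)
    (hD0 : ∀ u ∈ U, D u ≠ 0) :
    (∀ u ∈ U, ∀ i k : Fin 4, ricci (GD D) i k u = 0) ↔
      (∀ u ∈ U,
        (∀ i : Fin 4, 3 * (pd i D u) ^ 2 - 2 * D u * pd i (pd i D) u = 0) ∧
        3 * pd 0 D u * pd 1 D u - 2 * D u * pd 0 (pd 1 D) u = 0 ∧
        3 * pd 0 D u * pd 3 D u - 2 * D u * pd 0 (pd 3 D) u = 0 ∧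
        3 * pd 2 D u * pd 1 D u - 2 * D u * pd 2 (pd 1 D) u = 0 ∧
        3 * pd 2 D u * pd 3 D u - 2 * D u * pd 2 (pd 3 D) u = 0 ∧
        -2 * D u * pd 1 (pd 3 D) u + 3 * pd 0 D u * pd 2 D u
          - 4 * D u * pd 0 (pd 2 D) u = 0 ∧
        -2 * D u * pd 0 (pd 2 D) u + 3 * pd 1 D u * pd 3 D u
          - 4 * D u * pd 1 (pd 3 D) u = 0) := by
  have key := ricci_GD U hU D hD hD0
  constructor
  · intro H u hu
    have K : ∀ i k, _ := fun i k => key u hu i k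
    simp only [H u hu, mul_zero] at K
    refine ⟨fun i => ?_, ?_, ?_, ?_, ?_, ?_, ?_⟩
    · have := K i i
      have e : kd (fl i) i = 0 := by fin_cases i <;> simp [kd, fl]
      rw [e] at this
      linarith
    · have := K 0 1; simp [kd, fl] at this; linarith
    · have := K 0 3; simp [kd, fl] at this; linarith
    · have := K 2 1; simp [kd, fl] at this; linarith
    · have := K 2 3; simp [kd, fl] at this; linarith
    · have := K 0 2; simp [kd, fl] at this; linarith
    · have := K 1 3; simp [kd, fl] at this; linarith
  · intro H u hu i k
    obtain ⟨h1, h2, h3, h4, h5, h6, h7⟩ := H u hu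
    have hs := pd_symm U hU D hD u hu
    have h0 := hD0 u hu
    have e : 2 * (D u) ^ 2 * ricci (GD D) i k u = 0 := by
      rw [key u hu]
      have d0 := h1 0
      have d1 := h1 1
      have d2 := h1 2
      have d3 := h1 3
      have s10 := hs 1 0
      have s20 := hs 2 0
      have s30 := hs 3 0
      have s21 := hs 2 1
      have s31 := hs 3 1
      have s32 := hs 3 2
      rw [s21] at h4
      clear key H h1 hs
      fin_cases i <;> fin_cases k <;>
        simp [kd, fl, s10, s20, s30, s21, s31, s32] <;> linarith
    have : 2 * (D u) ^ 2 ≠ 0 := by positivity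
    exact (mul_eq_zero.mp e).resolve_left this
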